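/- arXiv:2409.10703 — 3 statements merged into one kernel-verified Lean document; each statement's English description precedes it below -/
import Mathlib

section
/- Let U₀ be a real m×N matrix and X₀ a real n×N matrix such that the stacked (m+n)×N matrix D₀ = [U₀; X₀] has rank m+n. Then for every real m×n matrix K there exists a real N×n matrix G with U₀G = K and X₀G = I_n. Moreover, for any such G and any real matrices A (n×n), B (n×m), Ω₀ (n×N), setting X₁ = A X₀ + B U₀ + Ω₀, one has A + BK = (X₁ − Ω₀)·G. -/
open Matrix

/-- Let `U₀` be a real `m × N` matrix and `X₀` a real `n × N` matrix
such that the stacked `(m+n) × N` matrix `D₀ = [U₀; X₀]` has rank `m + n`.  Then for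
every real `m × n` matrix `K` there exists a real `N × n` matrix `G` with `U₀ G = K`
and `X₀ G = Iₙ`.  Moreover, for any such `G` and any real matrices `A` (`n × n`),
`B` (`n × m`), `Ω₀` (`n × N`), setting `X₁ = A X₀ + B U₀ + Ω₀`, one has
`A + B K = (X₁ - Ω₀) G`. -/
theorem stmt10 {m n N : ℕ} (U₀ : Matrix (Fin m) (Fin N) ℝ) (X₀ : Matrix (Fin n) (Fin N) ℝ)
    (hrank : (Matrix.fromRows U₀ X₀).rank = m + n) :
    (∀ K : Matrix (Fin m) (Fin n) ℝ, ∃ G : Matrix (Fin N) (Fin n) ℝ,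
        U₀ * G = K ∧ X₀ * G = 1) ∧
    ∀ (K : Matrix (Fin m) (Fin n) ℝ) (G : Matrix (Fin N) (Fin n) ℝ),
      U₀ * G = K → X₀ * G = 1 →
      ∀ (A : Matrix (Fin n) (Fin n) ℝ) (B : Matrix (Fin n) (Fin m) ℝ)
        (Ω₀ X₁ : Matrix (Fin n) (Fin N) ℝ),
        X₁ = A * X₀ + B * U₀ + Ω₀ →
        A + B * K = (X₁ - Ω₀) * G := by
  refine ⟨fun K => ?_, ?_⟩
  · -- Full row rank makes the stacked matrix surjective, so it has a right inverse `R`;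
    -- then `G = R * [K; 1]` works.
    have hsurj : Function.Surjective (Matrix.fromRows U₀ X₀).mulVec := by
      have htop : LinearMap.range (Matrix.fromRows U₀ X₀).mulVecLin = ⊤ := by
        apply Submodule.eq_top_of_finrank_eq
        rw [← Matrix.rank, hrank]
        simp
      exact LinearMap.range_eq_top.mp htop
    obtain ⟨R, hR⟩ := Matrix.mulVec_surjective_iff_exists_right_inverse.mp hsurj
    have hG : Matrix.fromRows U₀ X₀ * (R * Matrix.fromRows K (1 : Matrix (Fin n) (Fin n) ℝ)) =
        Matrix.fromRows K 1 := by
      rw [← Matrix.mul_assoc, hR, Matrix.one_mul]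
    rw [Matrix.fromRows_mul] at hG
    exact ⟨R * Matrix.fromRows K 1, Matrix.fromRows_inj hG⟩
  · rintro K G rfl hX A B Ω₀ X₁ rfl
    rw [add_sub_cancel_right, Matrix.add_mul, Matrix.mul_assoc, hX, Matrix.mul_one,
      Matrix.mul_assoc]
end

section
/- Let P and Q be symmetric positive definite real n×n matrices, R a symmetric positive definite real m×m matrix, γ ∈ (0,1), c ≥ 0, G a real N×n matrix, U₀ a real m×N matrix, and X₁ a real n×N matrix. Suppose P − γ·(X₁G)ᵀP(X₁G) − Q − (U₀G)ᵀR(U₀G) − γ·c·GᵀG ⪰ 0 and (1−γ)·λmax((X₁G)ᵀP(X₁G) + c·GᵀG) ≤ λmin(Q + (U₀G)ᵀR(U₀G)). Then (X₁G)ᵀP(X₁G) + c·GᵀG ⪯ P. -/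
open Matrix

/-!
Write `M = (X₁G)ᵀP(X₁G) + c GᵀG` and `S = Q + (U₀G)ᵀR(U₀G)`. The feasibility hypothesis says
`P - γM - S ⪰ 0`, and
`P - M = (P - γM - S) + (S - λmin(S) I) + (1 - γ)(λmax(M) I - M) + (λmin(S) - (1 - γ)λmax(M)) I`,
where every summand is positive semidefinite: the second and third by the spectral theorem
(`posSemidef_sub_smul_one`, `posSemidef_smul_one_sub`), the last by the eigenvalue gap.
-/

/-- A lower bound on the eigenvalues of a symmetric matrix is a Loewner lower bound. -/
lemma posSemidef_sub_smul_one {n : ℕ} {A : Matrix (Fin n) (Fin n) ℝ} (hA : A.IsHermitian)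
    {μ : ℝ} (h : ∀ i, μ ≤ hA.eigenvalues i) : (A - μ • (1 : Matrix (Fin n) (Fin n) ℝ)).PosSemidef := by
  have hU : (hA.eigenvectorUnitary : Matrix (Fin n) (Fin n) ℝ) *
      (hA.eigenvectorUnitary : Matrix (Fin n) (Fin n) ℝ)ᴴ = 1 :=
    Unitary.coe_mul_star_self hA.eigenvectorUnitary
  have hs : A = (hA.eigenvectorUnitary : Matrix (Fin n) (Fin n) ℝ) *
      diagonal hA.eigenvalues * (hA.eigenvectorUnitary : Matrix (Fin n) (Fin n) ℝ)ᴴ := by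
    simpa [Unitary.conjStarAlgAut_apply, star_eq_conjTranspose, Function.comp_def]
      using hA.spectral_theorem
  have hd : (diagonal hA.eigenvalues - μ • (1 : Matrix (Fin n) (Fin n) ℝ)).PosSemidef := by
    rw [smul_one_eq_diagonal, diagonal_sub, posSemidef_diagonal_iff]
    exact fun i => sub_nonneg.2 (h i)
  have key := hd.mul_mul_conjTranspose_same
    (hA.eigenvectorUnitary : Matrix (Fin n) (Fin n) ℝ)
  rwa [mul_sub, sub_mul, ← hs, mul_smul_comm, smul_mul_assoc, mul_one, hU] at key

/-- An upper bound on the eigenvalues of a symmetric matrix is a Loewner upper bound. -/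
lemma posSemidef_smul_one_sub {n : ℕ} {A : Matrix (Fin n) (Fin n) ℝ} (hA : A.IsHermitian)
    {μ : ℝ} (h : ∀ i, hA.eigenvalues i ≤ μ) : (μ • (1 : Matrix (Fin n) (Fin n) ℝ) - A).PosSemidef := by
  have hU : (hA.eigenvectorUnitary : Matrix (Fin n) (Fin n) ℝ) *
      (hA.eigenvectorUnitary : Matrix (Fin n) (Fin n) ℝ)ᴴ = 1 :=
    Unitary.coe_mul_star_self hA.eigenvectorUnitary
  have hs : A = (hA.eigenvectorUnitary : Matrix (Fin n) (Fin n) ℝ) *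
      diagonal hA.eigenvalues * (hA.eigenvectorUnitary : Matrix (Fin n) (Fin n) ℝ)ᴴ := by
    simpa [Unitary.conjStarAlgAut_apply, star_eq_conjTranspose, Function.comp_def]
      using hA.spectral_theorem
  have hd : (μ • (1 : Matrix (Fin n) (Fin n) ℝ) - diagonal hA.eigenvalues).PosSemidef := by
    rw [smul_one_eq_diagonal, diagonal_sub, posSemidef_diagonal_iff]
    exact fun i => sub_nonneg.2 (h i)
  have key := hd.mul_mul_conjTranspose_same
    (hA.eigenvectorUnitary : Matrix (Fin n) (Fin n) ℝ)
  rwa [mul_sub, sub_mul, ← hs, mul_smul_comm, smul_mul_assoc, mul_one, hU] at key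

/-- Let `P` and `Q` be symmetric positive definite real `n × n`
matrices, `R` a symmetric positive definite real `m × m` matrix, `γ ∈ (0,1)`,
`c ≥ 0`, `G` a real `N × n` matrix, `U₀` a real `m × N` matrix, and `X₁` a real
`n × N` matrix.  Suppose
`P - γ (X₁G)ᵀ P (X₁G) - Q - (U₀G)ᵀ R (U₀G) - γ c GᵀG ⪰ 0` and
`(1 - γ) λmax((X₁G)ᵀP(X₁G) + c GᵀG) ≤ λmin(Q + (U₀G)ᵀR(U₀G))`.
Then `(X₁G)ᵀP(X₁G) + c GᵀG ⪯ P`. -/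
theorem stmt14 {n m N : ℕ} [NeZero n] (P Q : Matrix (Fin n) (Fin n) ℝ)
    (hP : P.PosDef) (hQ : Q.PosDef)
    (R : Matrix (Fin m) (Fin m) ℝ) (hR : R.PosDef)
    (γ : ℝ) (hγ : γ ∈ Set.Ioo (0 : ℝ) 1) (c : ℝ) (hc : 0 ≤ c)
    (G : Matrix (Fin N) (Fin n) ℝ) (U₀ : Matrix (Fin m) (Fin N) ℝ)
    (X₁ : Matrix (Fin n) (Fin N) ℝ)
    (hfeas : Matrix.PosSemidef
      (P - γ • ((X₁ * G)ᵀ * P * (X₁ * G)) - Q - (U₀ * G)ᵀ * R * (U₀ * G) -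
        (γ * c) • (Gᵀ * G)))
    (h1 : ((X₁ * G)ᵀ * P * (X₁ * G) + c • (Gᵀ * G)).IsHermitian)
    (h2 : (Q + (U₀ * G)ᵀ * R * (U₀ * G)).IsHermitian)
    (hgap : (1 - γ) * (⨆ i, h1.eigenvalues i) ≤ ⨅ i, h2.eigenvalues i) :
    Matrix.PosSemidef (P - ((X₁ * G)ᵀ * P * (X₁ * G) + c • (Gᵀ * G))) := by
  have hS := posSemidef_sub_smul_one h2 fun i => ciInf_le (Set.finite_range _).bddBelow i
  have hM := posSemidef_smul_one_sub h1 fun i => le_ciSup (Set.finite_range _).bddAbove i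
  have hM' := hM.smul (sub_nonneg.2 hγ.2.le)
  have hI := (PosSemidef.one (n := Fin n) (R := ℝ)).smul (sub_nonneg.2 hgap)
  convert ((hfeas.add hS).add hM').add hI using 1
  module
end

section
/- Let Q (n×n) and R (m×m) be symmetric positive definite real matrices, A a real n×n matrix, B a real n×m matrix, γ ∈ (0,1), and P* a symmetric positive semidefinite real n×n matrix satisfying the discounted algebraic Riccati equation P* = Q + γ·AᵀP*A − γ²·AᵀP*B(R+γBᵀP*B)^{-1}BᵀP*A. Let μ be a probability measure on ℝⁿ with zero mean (∫ w dμ(w) = 0 componentwise) and second-moment matrix W (∫ w wᵀ dμ(w) = W entrywise), set K* = −γ·(R+γBᵀP*B)^{-1}BᵀP*A and c* = (γ/(1−γ))·Tr(P*W). Then for every x ∈ ℝⁿ and every u ∈ ℝᵐ: xᵀP*x + c* ≤ xᵀQx + uᵀRu + γ·( ∫ (Ax+Bu+w)ᵀP*(Ax+Bu+w) dμ(w) + c* ), with equality when u = K*x. -/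
open Matrix MeasureTheory

/-!
Everything reduces to two identities. Integrating out the zero-mean noise,
`∫ (z + w)ᵀP(z + w) dμ(w) = zᵀPz + Tr(PW)` (`integral_quadForm_add`), and `c*` is the fixed point
of `c ↦ γ (Tr(PW) + c)`, so the constants cancel. The remaining deterministic Bellman equation
follows by completing the square (`riccati_complete_square`): with `S = R + γBᵀPB`, the Riccati
equation turns `xᵀQx + uᵀRu + γ(Ax + Bu)ᵀP(Ax + Bu)` into `xᵀPx + (u - Kx)ᵀS(u - Kx)`. Since `S` is
positive definite, the square is nonnegative, and it vanishes at `u = Kx`.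
-/

lemma integral_quadForm_add {n : ℕ} (P W : Matrix (Fin n) (Fin n) ℝ)
    (μ : Measure (Fin n → ℝ)) [IsProbabilityMeasure μ]
    (hint1 : ∀ i, Integrable (fun w : Fin n → ℝ => w i) μ)
    (hmean : ∀ i, ∫ w : Fin n → ℝ, w i ∂μ = 0)
    (hint2 : ∀ i j, Integrable (fun w : Fin n → ℝ => w i * w j) μ)
    (hW : ∀ i j, ∫ w : Fin n → ℝ, w i * w j ∂μ = W i j) (z : Fin n → ℝ) :
    ∫ w : Fin n → ℝ, (z + w) ⬝ᵥ (P *ᵥ (z + w)) ∂μ = z ⬝ᵥ (P *ᵥ z) + (P * W).trace := by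
  have expand : ∀ w : Fin n → ℝ, (z + w) ⬝ᵥ (P *ᵥ (z + w)) =
      ∑ i, ∑ j, (z i * P i j * z j + z i * P i j * w j + P i j * z j * w i
        + P i j * (w j * w i)) := by
    intro w
    simp only [dotProduct, mulVec, Pi.add_apply, Finset.mul_sum]
    exact Finset.sum_congr rfl fun i _ => Finset.sum_congr rfl fun j _ => by ring
  have i1 : ∀ i j, Integrable (fun w : Fin n → ℝ => z i * P i j * z j + z i * P i j * w j) μ :=
    fun i j => (integrable_const _).add ((hint1 j).const_mul _)
  have i2 : ∀ i j, Integrable (fun w : Fin n → ℝ =>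
      z i * P i j * z j + z i * P i j * w j + P i j * z j * w i) μ :=
    fun i j => (i1 i j).add ((hint1 i).const_mul _)
  have i3 : ∀ i j, Integrable (fun w : Fin n → ℝ =>
      z i * P i j * z j + z i * P i j * w j + P i j * z j * w i + P i j * (w j * w i)) μ :=
    fun i j => (i2 i j).add ((hint2 j i).const_mul _)
  have term : ∀ i j, ∫ w : Fin n → ℝ, (z i * P i j * z j + z i * P i j * w j
      + P i j * z j * w i + P i j * (w j * w i)) ∂μ = z i * P i j * z j + P i j * W j i := by
    intro i j
    rw [integral_add (i2 i j) ((hint2 j i).const_mul _),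
      integral_add (i1 i j) ((hint1 i).const_mul _),
      integral_add (integrable_const _) ((hint1 j).const_mul _)]
    simp only [integral_const_mul, hmean, hW]
    simp
  simp_rw [expand]
  rw [integral_finsetSum _ fun i _ => integrable_finsetSum _ fun j _ => i3 i j]
  simp_rw [integral_finsetSum Finset.univ fun j _ => i3 _ j, term, Finset.sum_add_distrib]
  simp [dotProduct, mulVec, trace, mul_apply, Finset.mul_sum, mul_assoc]

lemma posDef_inputWeight {n m : ℕ} {R : Matrix (Fin m) (Fin m) ℝ} (hR : R.PosDef)
    (B : Matrix (Fin n) (Fin m) ℝ) {γ : ℝ} (hγ : 0 ≤ γ)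
    {P : Matrix (Fin n) (Fin n) ℝ} (hP : P.PosSemidef) :
    (R + γ • (Bᵀ * P * B)).PosDef := by
  have h := hP.conjTranspose_mul_mul_same B
  rw [conjTranspose_eq_transpose_of_trivial] at h
  exact hR.add_posSemidef (h.smul hγ)

/-- A solution of the Riccati equation makes the one-step cost, for noiseless dynamics, equal to
the value `xᵀPx` plus a square in the deviation of the input from the optimal feedback. -/
lemma riccati_complete_square {n m : ℕ} (Q : Matrix (Fin n) (Fin n) ℝ)
    (R : Matrix (Fin m) (Fin m) ℝ) (hR : R.PosDef)
    (A : Matrix (Fin n) (Fin n) ℝ) (B : Matrix (Fin n) (Fin m) ℝ) (γ : ℝ) (hγ : 0 ≤ γ)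
    (P : Matrix (Fin n) (Fin n) ℝ) (hP : P.PosSemidef)
    (hRic : P = Q + γ • (Aᵀ * P * A) -
      (γ ^ 2) • (Aᵀ * P * B * (R + γ • (Bᵀ * P * B))⁻¹ * (Bᵀ * P * A)))
    (K : Matrix (Fin m) (Fin n) ℝ)
    (hK : K = -(γ • ((R + γ • (Bᵀ * P * B))⁻¹ * (Bᵀ * P * A))))
    (x : Fin n → ℝ) (u : Fin m → ℝ) :
    x ⬝ᵥ (Q *ᵥ x) + u ⬝ᵥ (R *ᵥ u) + γ * ((A *ᵥ x + B *ᵥ u) ⬝ᵥ (P *ᵥ (A *ᵥ x + B *ᵥ u))) =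
      x ⬝ᵥ (P *ᵥ x) +
        (u - K *ᵥ x) ⬝ᵥ ((R + γ • (Bᵀ * P * B)) *ᵥ (u - K *ᵥ x)) := by
  have hS := posDef_inputWeight hR B hγ hP
  have symm_form : ∀ {k : ℕ} {M : Matrix (Fin k) (Fin k) ℝ}, M.IsHermitian →
      ∀ a b : Fin k → ℝ, a ⬝ᵥ (M *ᵥ b) = b ⬝ᵥ (M *ᵥ a) := by
    intro k M hM a b
    have hMt : Mᵀ = M := by rw [← conjTranspose_eq_transpose_of_trivial]; exact hM
    rw [dotProduct_mulVec, ← mulVec_transpose, hMt, dotProduct_comm]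
  have move : ∀ {k l : ℕ} (M : Matrix (Fin k) (Fin l) ℝ) (a : Fin l → ℝ) (b : Fin k → ℝ),
      a ⬝ᵥ (Mᵀ *ᵥ b) = (M *ᵥ a) ⬝ᵥ b := by
    intro k l M a b
    rw [dotProduct_mulVec, vecMul_transpose]
  have hSu : ∀ v : Fin m → ℝ, v ⬝ᵥ ((R + γ • (Bᵀ * P * B)) *ᵥ u) =
      v ⬝ᵥ (R *ᵥ u) + γ * ((B *ᵥ v) ⬝ᵥ (P *ᵥ (B *ᵥ u))) := by
    intro v
    rw [add_mulVec, smul_mulVec, dotProduct_add, dotProduct_smul, ← mulVec_mulVec,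
      ← mulVec_mulVec, move, smul_eq_mul]
  -- `y = S⁻¹BᵀPAx` is the vector with `Kx = -γy`.
  obtain ⟨y, hy⟩ : ∃ y, y = (R + γ • (Bᵀ * P * B))⁻¹ *ᵥ (Bᵀ *ᵥ (P *ᵥ (A *ᵥ x))) := ⟨_, rfl⟩
  have hKx : K *ᵥ x = -(γ • y) := by
    rw [hK, hy, neg_mulVec, smul_mulVec]
    simp only [mulVec_mulVec, Matrix.mul_assoc]
  have hSy : (R + γ • (Bᵀ * P * B)) *ᵥ y = Bᵀ *ᵥ (P *ᵥ (A *ᵥ x)) := by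
    rw [hy, mulVec_mulVec, mul_nonsing_inv _ ((isUnit_iff_isUnit_det _).1 hS.isUnit), one_mulVec]
  have hPx : x ⬝ᵥ (P *ᵥ x) = x ⬝ᵥ (Q *ᵥ x) + γ * ((A *ᵥ x) ⬝ᵥ (P *ᵥ (A *ᵥ x)))
      - γ ^ 2 * ((A *ᵥ x) ⬝ᵥ (P *ᵥ (B *ᵥ y))) := by
    have h := congrArg (fun M : Matrix (Fin n) (Fin n) ℝ => x ⬝ᵥ (M *ᵥ x)) hRic
    simp only [sub_mulVec, add_mulVec, smul_mulVec, dotProduct_add, dotProduct_sub,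
      dotProduct_smul, smul_eq_mul, ← mulVec_mulVec, move] at h
    rw [hy]
    exact h
  have e1 := hSu u
  have e2 := symm_form hS.isHermitian y u
  have e3 := symm_form hP.isHermitian (A *ᵥ x) (B *ᵥ u)
  have e4 := symm_form hP.isHermitian (A *ᵥ x) (B *ᵥ y)
  rw [hSy, move] at e2
  rw [hKx, hPx, sub_neg_eq_add]
  simp only [mulVec_add, mulVec_smul, add_dotProduct, dotProduct_add, smul_dotProduct,
    dotProduct_smul, smul_eq_mul, hSy, move, e1, e2, e3, e4]
  ring

/-- Let `Q` (`n × n`) and `R` (`m × m`) be symmetric positive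
definite real matrices, `A` a real `n × n` matrix, `B` a real `n × m` matrix,
`γ ∈ (0,1)`, and `P*` a symmetric positive semidefinite real `n × n` matrix
satisfying the discounted algebraic Riccati equation
`P* = Q + γ AᵀP*A - γ² AᵀP*B (R + γBᵀP*B)⁻¹ BᵀP*A`.  Let `μ` be a probability
measure on `ℝⁿ` with zero mean and second-moment matrix `W`, set
`K* = -γ (R + γBᵀP*B)⁻¹ BᵀP*A` and `c* = (γ/(1-γ)) Tr(P*W)`.  Then for every
`x ∈ ℝⁿ` and every `u ∈ ℝᵐ`:
`xᵀP*x + c* ≤ xᵀQx + uᵀRu + γ (∫ (Ax + Bu + w)ᵀP*(Ax + Bu + w) dμ(w) + c*)`,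
with equality when `u = K* x`. -/
theorem stmt19 {n m : ℕ} (Q : Matrix (Fin n) (Fin n) ℝ) (hQ : Q.PosDef)
    (R : Matrix (Fin m) (Fin m) ℝ) (hR : R.PosDef)
    (A : Matrix (Fin n) (Fin n) ℝ) (B : Matrix (Fin n) (Fin m) ℝ)
    (γ : ℝ) (hγ : γ ∈ Set.Ioo (0 : ℝ) 1)
    (Pstar : Matrix (Fin n) (Fin n) ℝ) (hPs : Pstar.PosSemidef)
    (hRic : Pstar = Q + γ • (Aᵀ * Pstar * A) -
      (γ ^ 2) • (Aᵀ * Pstar * B * (R + γ • (Bᵀ * Pstar * B))⁻¹ * (Bᵀ * Pstar * A)))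
    (W : Matrix (Fin n) (Fin n) ℝ)
    (μ : Measure (Fin n → ℝ)) [IsProbabilityMeasure μ]
    (hint1 : ∀ i, Integrable (fun w : Fin n → ℝ => w i) μ)
    (hmean : ∀ i, ∫ w : Fin n → ℝ, w i ∂μ = 0)
    (hint2 : ∀ i j, Integrable (fun w : Fin n → ℝ => w i * w j) μ)
    (hW : ∀ i j, ∫ w : Fin n → ℝ, w i * w j ∂μ = W i j)
    (Kstar : Matrix (Fin m) (Fin n) ℝ)
    (hK : Kstar = -(γ • ((R + γ • (Bᵀ * Pstar * B))⁻¹ * (Bᵀ * Pstar * A))))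
    (cstar : ℝ) (hc : cstar = γ / (1 - γ) * (Pstar * W).trace) :
    (∀ (x : Fin n → ℝ) (u : Fin m → ℝ),
      x ⬝ᵥ (Pstar *ᵥ x) + cstar ≤
        x ⬝ᵥ (Q *ᵥ x) + u ⬝ᵥ (R *ᵥ u) +
          γ * ((∫ w : Fin n → ℝ,
            (A *ᵥ x + B *ᵥ u + w) ⬝ᵥ (Pstar *ᵥ (A *ᵥ x + B *ᵥ u + w)) ∂μ) + cstar)) ∧
    (∀ x : Fin n → ℝ,
      x ⬝ᵥ (Pstar *ᵥ x) + cstar =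
        x ⬝ᵥ (Q *ᵥ x) + (Kstar *ᵥ x) ⬝ᵥ (R *ᵥ (Kstar *ᵥ x)) +
          γ * ((∫ w : Fin n → ℝ,
            (A *ᵥ x + B *ᵥ (Kstar *ᵥ x) + w) ⬝ᵥ
              (Pstar *ᵥ (A *ᵥ x + B *ᵥ (Kstar *ᵥ x) + w)) ∂μ) + cstar)) := by
  have hγ0 := hγ.1
  have hγ1 : 1 - γ ≠ 0 := (sub_pos.2 hγ.2).ne'
  have hcfix : γ * ((Pstar * W).trace + cstar) = cstar := by
    rw [hc]
    field_simp
    ring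
  have bellman : ∀ (x : Fin n → ℝ) (u : Fin m → ℝ),
      x ⬝ᵥ (Q *ᵥ x) + u ⬝ᵥ (R *ᵥ u) +
          γ * ((∫ w : Fin n → ℝ,
            (A *ᵥ x + B *ᵥ u + w) ⬝ᵥ (Pstar *ᵥ (A *ᵥ x + B *ᵥ u + w)) ∂μ) + cstar) =
        x ⬝ᵥ (Pstar *ᵥ x) + cstar +
          (u - Kstar *ᵥ x) ⬝ᵥ ((R + γ • (Bᵀ * Pstar * B)) *ᵥ (u - Kstar *ᵥ x)) := by
    intro x u
    rw [integral_quadForm_add Pstar W μ hint1 hmean hint2 hW]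
    have h := riccati_complete_square Q R hR A B γ hγ0.le Pstar hPs hRic Kstar hK x u
    linarith
  refine ⟨fun x u => ?_, fun x => ?_⟩
  · rw [bellman]
    have h := (posDef_inputWeight hR B hγ0.le hPs).posSemidef.dotProduct_mulVec_nonneg
      (u - Kstar *ᵥ x)
    rw [star_trivial] at h
    linarith
  · rw [bellman]
    simp
end
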